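/- Let ħ > 0, P ∈ ℝⁿ, W smooth ℤⁿ-periodic, E ∈ ℝ, and let w, w* : ℝⁿ → ℝ be smooth, ℤⁿ-periodic and strictly positive, satisfying −(ħ²/2)Δw + ħ P·Dw + W w = E w and −(ħ²/2)Δw* − ħ P·Dw* + W w* = E w* on ℝⁿ. Then, with σ = w w*, the identity ħ · div( w* Dw − w Dw* ) = 2 P · Dσ holds on ℝⁿ. -/

import Mathlib

/-! Subtract `w` times the equation for `wstar` from `wstar` times the equation for `w`: the
zeroth-order terms cancel, the drift terms combine to `hbar * P · D(w * wstar)` by the product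
rule, and the second-order terms give `hbar ^ 2 / 2` times `wstar Δw - w Δwstar`. The latter is
`div (wstar Dw - w Dwstar)`, since the first-order cross terms cancel (`dvg_flux`). Dividing by
`hbar / 2` yields the identity. -/

open MeasureTheory

noncomputable section

/-- `ℝⁿ` with the Euclidean inner product. -/
abbrev En (n : ℕ) := EuclideanSpace ℝ (Fin n)

/-- The integer vector `k` viewed as a point of `ℝⁿ`. -/
def intVec {n : ℕ} (k : Fin n → ℤ) : En n :=
  (EuclideanSpace.equiv (Fin n) ℝ).symm (fun i => (k i : ℝ))

/-- `ℤⁿ`-periodicity for scalar functions on `ℝⁿ`. -/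
def IsPeriodic {n : ℕ} (f : En n → ℝ) : Prop :=
  ∀ (x : En n) (k : Fin n → ℤ), f (x + intVec k) = f x

/-- `ℤⁿ`-periodicity for vector fields on `ℝⁿ`. -/
def IsPeriodicV {n : ℕ} (F : En n → En n) : Prop :=
  ∀ (x : En n) (k : Fin n → ℤ), F (x + intVec k) = F x

/-- The unit cube `[0,1]ⁿ`, the fundamental domain of the torus. -/
def unitCube (n : ℕ) : Set (En n) := {x | ∀ i, x i ∈ Set.Icc (0:ℝ) 1}

/-- Euclidean dot product. -/
def dot {n : ℕ} (x y : En n) : ℝ := ∑ i, x i * y i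

/-- Partial derivative in the `i`-th coordinate direction. -/
def pd {n : ℕ} (i : Fin n) (f : En n → ℝ) (x : En n) : ℝ :=
  fderiv ℝ f x (EuclideanSpace.single i 1)

/-- The Laplacian of a scalar function. -/
def lap {n : ℕ} (f : En n → ℝ) (x : En n) : ℝ :=
  ∑ i, pd i (fun y => pd i f y) x

/-- The divergence of a vector field. -/
def dvg {n : ℕ} (F : En n → En n) (x : En n) : ℝ :=
  ∑ i, fderiv ℝ (fun y => F y i) x (EuclideanSpace.single i 1)

/-- The coordinates of Mathlib's gradient are the partial derivatives `pd`; differentiability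
is not needed, as both sides are `0` without it. -/
lemma gradient_apply_eq_pd {n : ℕ} (f : En n → ℝ) (x : En n) (i : Fin n) :
    gradient f x i = pd i f x := by
  have h : inner ℝ (gradient f x) (EuclideanSpace.single i (1 : ℝ)) = pd i f x :=
    InnerProductSpace.toDual_symm_apply
  rw [← h, EuclideanSpace.inner_single_right]
  simp

lemma differentiable_pd {n : ℕ} {f : En n → ℝ} (hf : ContDiff ℝ (⊤ : ℕ∞) f) (i : Fin n) :
    Differentiable ℝ (pd i f) := by
  have h : ContDiff ℝ 1 (fderiv ℝ f) := hf.fderiv_right (by norm_cast)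
  exact (h.differentiable one_ne_zero).clm_apply (differentiable_const _)

lemma pd_mul {n : ℕ} {f g : En n → ℝ} {x : En n} (hf : DifferentiableAt ℝ f x)
    (hg : DifferentiableAt ℝ g x) (i : Fin n) :
    pd i (fun y => f y * g y) x = f x * pd i g x + g x * pd i f x := by
  simp [pd, fderiv_fun_mul hf hg]

lemma dot_gradient_mul {n : ℕ} (P : En n) {f g : En n → ℝ} {x : En n}
    (hf : DifferentiableAt ℝ f x) (hg : DifferentiableAt ℝ g x) :
    dot P (gradient (fun y => f y * g y) x)
      = f x * dot P (gradient g x) + g x * dot P (gradient f x) := by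
  simp only [dot, gradient_apply_eq_pd, pd_mul hf hg, Finset.mul_sum, ← Finset.sum_add_distrib]
  exact Finset.sum_congr rfl fun i _ => by ring

lemma dvg_flux {n : ℕ} {f g : En n → ℝ} (hf : ContDiff ℝ (⊤ : ℕ∞) f)
    (hg : ContDiff ℝ (⊤ : ℕ∞) g) (x : En n) :
    dvg (fun y => g y • gradient f y - f y • gradient g y) x = g x * lap f x - f x * lap g x := by
  simp only [dvg, lap, Finset.mul_sum, ← Finset.sum_sub_distrib]
  refine Finset.sum_congr rfl fun i _ => ?_
  have hf' : DifferentiableAt ℝ f x := hf.differentiable (by simp) x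
  have hg' : DifferentiableAt ℝ g x := hg.differentiable (by simp) x
  have hpf : DifferentiableAt ℝ (fun y => pd i f y) x := differentiable_pd hf i x
  have hpg : DifferentiableAt ℝ (fun y => pd i g y) x := differentiable_pd hg i x
  have e : (fun y => (g y • gradient f y - f y • gradient g y) i)
      = fun y => g y * pd i f y - f y * pd i g y := by
    funext y
    simp [gradient_apply_eq_pd]
  have e₁ := pd_mul hg' hpf i
  have e₂ := pd_mul hf' hpg i
  rw [e, fderiv_fun_sub (hg'.fun_mul hpf) (hf'.fun_mul hpg)]
  change pd i (fun y => g y * pd i f y) x - pd i (fun y => f y * pd i g y) x = _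
  rw [e₁, e₂]
  ring

/-- the identity `hbar div(w* Dw − w Dw*) = 2 P · Dσ`, `σ = w w*`,
for solutions of the dual eigenvalue problems. -/
theorem div_flux_eq_two_P_dot_grad_sigma {n : ℕ} (hbar : ℝ) (h_hbar : 0 < hbar) (P : En n)
    (W : En n → ℝ) (hW : ContDiff ℝ (⊤ : ℕ∞) W) (hWper : IsPeriodic W) (E : ℝ)
    (w wstar : En n → ℝ)
    (hw : ContDiff ℝ (⊤ : ℕ∞) w) (hwper : IsPeriodic w) (hwpos : ∀ x, 0 < w x)
    (hwstar : ContDiff ℝ (⊤ : ℕ∞) wstar) (hwstarper : IsPeriodic wstar)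
    (hwstarpos : ∀ x, 0 < wstar x)
    (heigw : ∀ x, -(hbar ^ 2 / 2) * lap w x + hbar * dot P (gradient w x) + W x * w x
      = E * w x)
    (heigwstar : ∀ x, -(hbar ^ 2 / 2) * lap wstar x - hbar * dot P (gradient wstar x)
      + W x * wstar x = E * wstar x) :
    ∀ x, hbar * dvg (fun y => wstar y • gradient w y - w y • gradient wstar y) x
      = 2 * dot P (gradient (fun y => w y * wstar y) x) := by
  intro x
  rw [dvg_flux hw hwstar, dot_gradient_mul P (hw.differentiable (by simp) x)
    (hwstar.differentiable (by simp) x)]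
  apply mul_left_cancel₀ h_hbar.ne'
  linear_combination 2 * w x * heigwstar x - 2 * wstar x * heigw x
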